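/- Assume P and Q are continuous (the distribution of Λ under P is atomless) and let Γ be any set of adversaries containing all constant maps. If φ is a Γ-admissible binary test family, then for every b ∈ ℬ, φ(x,b) = 1{ℓ(b) ≤ E_φ(x)} for P-almost every x, where E_φ(x) = sup_{b∈ℬ} ℓ(b)φ(x,b). -/

import Mathlib

open MeasureTheory
open scoped ENNReal

namespace PostHocTesting

variable {𝒳 : Type*} [MeasurableSpace 𝒳]

/-- The e-value associated to a test family `δ`:
`E_δ(x) = sup_{b ∈ ℬ} ℓ(b) · δ(x,b)`, valued in `ℝ≥0∞`. -/
noncomputable def Esup (ℬ : Set ℝ) (ℓ : ℝ → ℝ) (δ : 𝒳 → ℝ → ℝ) (x : 𝒳) : ℝ≥0∞ :=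
  ⨆ b : ℬ, ENNReal.ofReal (ℓ (b : ℝ) * δ x (b : ℝ))

/-- A (randomized) test family: jointly measurable, `[0,1]`-valued on scenarios,
with measurable associated e-value. -/
def IsTestFamily (ℬ : Set ℝ) (ℓ : ℝ → ℝ) (δ : 𝒳 → ℝ → ℝ) : Prop :=
  Measurable (fun p : 𝒳 × ℝ => δ p.1 p.2) ∧
  (∀ x : 𝒳, ∀ b ∈ ℬ, δ x b ∈ Set.Icc (0 : ℝ) 1) ∧
  Measurable (Esup ℬ ℓ δ)

/-- A binary test family takes only the values 0 and 1. -/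
def IsBinaryTestFamily (ℬ : Set ℝ) (ℓ : ℝ → ℝ) (δ : 𝒳 → ℝ → ℝ) : Prop :=
  IsTestFamily ℬ ℓ δ ∧ ∀ x : 𝒳, ∀ b ∈ ℬ, δ x b = 0 ∨ δ x b = 1

/-- Type-I risk `R_P(δ) = ∫ sup_{b∈ℬ} ℓ(b) δ(x,b) dP(x)`. -/
noncomputable def typeIRisk (P : Measure 𝒳) (ℬ : Set ℝ) (ℓ : ℝ → ℝ)
    (δ : 𝒳 → ℝ → ℝ) : ℝ≥0∞ :=
  ∫⁻ x, Esup ℬ ℓ δ x ∂P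

/-- `δ` is type-I risk safe if `R_P(δ) ≤ 1`. -/
def RiskSafe (P : Measure 𝒳) (ℬ : Set ℝ) (ℓ : ℝ → ℝ) (δ : 𝒳 → ℝ → ℝ) : Prop :=
  typeIRisk P ℬ ℓ δ ≤ 1

/-- Type-II risk of `δ` against the adversary `B`:
`∫ m(B(x)) (1 - δ(x, B(x))) dQ(x)`. -/
noncomputable def typeIIRisk (Q : Measure 𝒳) (m : ℝ → ℝ) (δ : 𝒳 → ℝ → ℝ)
    (B : 𝒳 → ℝ) : ℝ≥0∞ :=
  ∫⁻ x, ENNReal.ofReal (m (B x) * (1 - δ x (B x))) ∂Q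

/-- The set `𝐂` of constant adversaries. -/
def ConstAdv (𝒳 : Type*) (ℬ : Set ℝ) : Set (𝒳 → ℝ) :=
  {B | ∃ b ∈ ℬ, B = fun _ => b}

/-- The set `𝐔` of all measurable adversaries. -/
def AllAdv (𝒳 : Type*) [MeasurableSpace 𝒳] (ℬ : Set ℝ) : Set (𝒳 → ℝ) :=
  {B | Measurable B ∧ ∀ x, B x ∈ ℬ}

/-- `φ` is strictly preferable to `δ` relative to the adversary class `Γ`. -/
def StrictlyPreferable (P Q : Measure 𝒳) (ℬ : Set ℝ) (ℓ m : ℝ → ℝ)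
    (Γ : Set (𝒳 → ℝ)) (φ δ : 𝒳 → ℝ → ℝ) : Prop :=
  RiskSafe P ℬ ℓ φ ∧
  (∀ B ∈ Γ, typeIIRisk Q m φ B ≤ typeIIRisk Q m δ B) ∧
  (∃ B ∈ Γ, typeIIRisk Q m φ B < typeIIRisk Q m δ B)

/-- `Γ`-admissibility among randomized test families. -/
def Admissible (P Q : Measure 𝒳) (ℬ : Set ℝ) (ℓ m : ℝ → ℝ)
    (Γ : Set (𝒳 → ℝ)) (δ : 𝒳 → ℝ → ℝ) : Prop :=
  RiskSafe P ℬ ℓ δ ∧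
  ∀ φ : 𝒳 → ℝ → ℝ, IsTestFamily ℬ ℓ φ → ¬ StrictlyPreferable P Q ℬ ℓ m Γ φ δ

/-- `Γ`-admissibility among binary test families. -/
def AdmissibleBinary (P Q : Measure 𝒳) (ℬ : Set ℝ) (ℓ m : ℝ → ℝ)
    (Γ : Set (𝒳 → ℝ)) (δ : 𝒳 → ℝ → ℝ) : Prop :=
  RiskSafe P ℬ ℓ δ ∧
  ∀ φ : 𝒳 → ℝ → ℝ, IsBinaryTestFamily ℬ ℓ φ → ¬ StrictlyPreferable P Q ℬ ℓ m Γ φ δ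

/-- Likelihood ratio `Λ = dQ/dP`. -/
noncomputable def LR (P Q : Measure 𝒳) (x : 𝒳) : ℝ := (Q.rnDeriv P x).toReal

/-- `P` and `Q` are continuous: the distribution of `Λ` under `P` is atomless. -/
def AtomlessLR (P Q : Measure 𝒳) : Prop := ∀ c : ℝ, P {x | LR P Q x = c} = 0

/-! Raise an admissible family `φ` to `1` in a scenario `b`, wherever `ℓ b ≤ E_φ`. This leaves
`E_φ`, hence the type-I risk, unchanged and can only lower the type-II risks. By admissibility the
type-II risk against the constant adversary `b` does not drop, so the change is on a null set only.
A single scenario is changed at a time because the adversaries in `Γ` need not take values in `ℬ`,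
and outside `ℬ` nothing is known about `m` and `φ`. -/

variable {P Q : Measure 𝒳} {ℬ : Set ℝ} {ℓ m : ℝ → ℝ} {Γ : Set (𝒳 → ℝ)} {δ ε : 𝒳 → ℝ → ℝ}
  {g : 𝒳 → ℝ} {b : ℝ}

omit [MeasurableSpace 𝒳] in
theorem ofReal_mul_le_Esup (hb : b ∈ ℬ) (x : 𝒳) :
    ENNReal.ofReal (ℓ b * δ x b) ≤ Esup ℬ ℓ δ x :=
  le_iSup (fun b : ℬ => ENNReal.ofReal (ℓ b * δ x b)) ⟨b, hb⟩

theorem IsTestFamily.measurable_apply (hδ : IsTestFamily ℬ ℓ δ) (b : ℝ) :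
    Measurable fun x => δ x b :=
  hδ.1.comp measurable_prodMk_right

theorem ae_eq_of_typeIIRisk_const_le [IsFiniteMeasure Q] (hm : 0 < m b)
    (hδ : Measurable fun x => δ x b) (hδε : ∀ x, δ x b ≤ ε x b)
    (hε : ∀ x, ε x b ∈ Set.Icc (0 : ℝ) 1)
    (hrisk : typeIIRisk Q m δ (fun _ => b) ≤ typeIIRisk Q m ε (fun _ => b)) :
    (fun x => δ x b) =ᵐ[Q] fun x => ε x b := by
  have loss_le : ∀ x, ENNReal.ofReal (m b * (1 - ε x b)) ≤ ENNReal.ofReal (m b * (1 - δ x b)) :=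
    fun x => by gcongr; exact hδε x
  have risk_ne_top : typeIIRisk Q m ε (fun _ => b) ≠ ∞ := by
    refine ((lintegral_mono fun x => ?_).trans_lt
      (lintegral_const_lt_top (μ := Q) (ENNReal.ofReal_ne_top (r := m b)))).ne
    exact ENNReal.ofReal_le_ofReal (mul_le_of_le_one_right hm.le (by linarith [(hε x).1]))
  have loss_ae_eq := ae_eq_of_ae_le_of_lintegral_le (ae_of_all Q loss_le) risk_ne_top
    ((hδ.const_sub 1).const_mul (m b)).ennreal_ofReal.aemeasurable hrisk
  filter_upwards [loss_ae_eq] with x hx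
  have hε_nonneg : 0 ≤ 1 - ε x b := sub_nonneg.2 (hε x).2
  have hδ_nonneg : 0 ≤ 1 - δ x b := sub_nonneg.2 ((hδε x).trans (hε x).2)
  rw [ENNReal.ofReal_eq_ofReal_iff (by positivity) (by positivity)] at hx
  linarith [mul_left_cancel₀ hm.ne' hx]

/-- The family `δ` with its test in the scenario `b` replaced by `g`; it serves as the competitor
of `δ` in the definition of admissibility. -/
noncomputable def replaceAt (δ : 𝒳 → ℝ → ℝ) (b : ℝ) (g : 𝒳 → ℝ) (x : 𝒳) : ℝ → ℝ :=
  Function.update (δ x) b (g x)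

omit [MeasurableSpace 𝒳] in
@[simp]
theorem replaceAt_self (x : 𝒳) : replaceAt δ b g x b = g x :=
  Function.update_self ..

omit [MeasurableSpace 𝒳] in
theorem replaceAt_of_ne {c : ℝ} (hc : c ≠ b) (x : 𝒳) : replaceAt δ b g x c = δ x c :=
  Function.update_of_ne hc ..

omit [MeasurableSpace 𝒳] in
theorem le_replaceAt (hg : ∀ x, δ x b ≤ g x) (x : 𝒳) : δ x ≤ replaceAt δ b g x :=
  le_update_self_iff.2 (hg x)

omit [MeasurableSpace 𝒳] in
theorem Esup_replaceAt (hℓ : 0 ≤ ℓ b) (hg : ∀ x, δ x b ≤ g x)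
    (hgE : ∀ x, ENNReal.ofReal (ℓ b * g x) ≤ Esup ℬ ℓ δ x) :
    Esup ℬ ℓ (replaceAt δ b g) = Esup ℬ ℓ δ := by
  funext x
  refine le_antisymm (iSup_le fun ⟨c, hc⟩ => ?_) (iSup_mono fun ⟨c, _⟩ => ?_)
  · obtain rfl | hcb := eq_or_ne c b
    · simpa only [replaceAt_self] using hgE x
    · simpa only [replaceAt_of_ne hcb] using ofReal_mul_le_Esup hc x
  · obtain rfl | hcb := eq_or_ne c b
    · exact ENNReal.ofReal_le_ofReal (mul_le_mul_of_nonneg_left (le_replaceAt hg x c) hℓ)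
    · simp only [replaceAt_of_ne hcb, le_refl]

theorem typeIIRisk_replaceAt_le (hm : 0 ≤ m b) (hg : ∀ x, δ x b ≤ g x) (B : 𝒳 → ℝ) :
    typeIIRisk Q m (replaceAt δ b g) B ≤ typeIIRisk Q m δ B := by
  refine lintegral_mono fun x => ENNReal.ofReal_le_ofReal ?_
  obtain hB | hB := eq_or_ne (B x) b
  · rw [hB]
    exact mul_le_mul_of_nonneg_left (sub_le_sub_left (le_replaceAt hg x b) 1) hm
  · rw [replaceAt_of_ne hB]

theorem measurable_uncurry_replaceAt (hδ : Measurable fun p : 𝒳 × ℝ => δ p.1 p.2)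
    (hg : Measurable g) : Measurable fun p : 𝒳 × ℝ => replaceAt δ b g p.1 p.2 := by
  simp only [replaceAt, Function.update_apply]
  exact Measurable.ite (measurable_snd (measurableSet_singleton b)) (hg.comp measurable_fst) hδ

theorem isBinaryTestFamily_replaceAt (hδ : IsBinaryTestFamily ℬ ℓ δ) (hg : Measurable g)
    (hg01 : ∀ x, g x = 0 ∨ g x = 1) (hE : Measurable (Esup ℬ ℓ (replaceAt δ b g))) :
    IsBinaryTestFamily ℬ ℓ (replaceAt δ b g) := by
  have binary : ∀ x, ∀ c ∈ ℬ, replaceAt δ b g x c = 0 ∨ replaceAt δ b g x c = 1 := by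
    intro x c hc
    obtain rfl | hcb := eq_or_ne c b
    · simpa only [replaceAt_self] using hg01 x
    · simpa only [replaceAt_of_ne hcb] using hδ.2 x c hc
  refine ⟨⟨measurable_uncurry_replaceAt hδ.1.1 hg, fun x c hc => ?_, hE⟩, binary⟩
  obtain h | h := binary x c hc <;> simp [h]

/-- The test `1{ℓ(b) ≤ E_δ(x)}` in scenario `b`: the largest binary test that does not raise
`E_δ`. -/
noncomputable def canonicalTest (ℬ : Set ℝ) (ℓ : ℝ → ℝ) (δ : 𝒳 → ℝ → ℝ) (b : ℝ) (x : 𝒳) : ℝ :=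
  if ENNReal.ofReal (ℓ b) ≤ Esup ℬ ℓ δ x then 1 else 0

omit [MeasurableSpace 𝒳] in
theorem canonicalTest_eq_zero_or_one (x : 𝒳) :
    canonicalTest ℬ ℓ δ b x = 0 ∨ canonicalTest ℬ ℓ δ b x = 1 :=
  (ite_eq_or_eq _ _ _).symm

theorem measurable_canonicalTest (hE : Measurable (Esup ℬ ℓ δ)) :
    Measurable (canonicalTest ℬ ℓ δ b) :=
  Measurable.ite (measurableSet_le measurable_const hE) measurable_const measurable_const

omit [MeasurableSpace 𝒳] in
theorem ofReal_mul_canonicalTest_le_Esup (x : 𝒳) :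
    ENNReal.ofReal (ℓ b * canonicalTest ℬ ℓ δ b x) ≤ Esup ℬ ℓ δ x := by
  unfold canonicalTest
  split_ifs with h <;> simp [h]

theorem IsBinaryTestFamily.le_canonicalTest (hδ : IsBinaryTestFamily ℬ ℓ δ) (hb : b ∈ ℬ) (x : 𝒳) :
    δ x b ≤ canonicalTest ℬ ℓ δ b x := by
  unfold canonicalTest
  split_ifs with h
  · exact (hδ.1.2.1 x b hb).2
  · refine ((hδ.2 x b hb).resolve_right fun reject => h ?_).le
    simpa only [reject, mul_one] using ofReal_mul_le_Esup (ℓ := ℓ) (δ := δ) hb x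

theorem stmt6_general [IsFiniteMeasure Q] (hb : b ∈ ℬ) (hℓ : 0 ≤ ℓ b) (hm : 0 < m b)
    (hΓ : (fun _ => b) ∈ Γ) (hδ : IsBinaryTestFamily ℬ ℓ δ)
    (hadm : AdmissibleBinary P Q ℬ ℓ m Γ δ) :
    (fun x => δ x b) =ᵐ[Q] canonicalTest ℬ ℓ δ b := by
  let ψ := replaceAt δ b (canonicalTest ℬ ℓ δ b)
  have hle : ∀ x, δ x b ≤ canonicalTest ℬ ℓ δ b x := hδ.le_canonicalTest hb
  have hE : Esup ℬ ℓ ψ = Esup ℬ ℓ δ := Esup_replaceAt hℓ hle ofReal_mul_canonicalTest_le_Esup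
  have hEm : Measurable (Esup ℬ ℓ δ) := hδ.1.2.2
  have hψ : IsBinaryTestFamily ℬ ℓ ψ := isBinaryTestFamily_replaceAt hδ
    (measurable_canonicalTest hEm) canonicalTest_eq_zero_or_one (hE ▸ hEm)
  have hsafe : RiskSafe P ℬ ℓ ψ := by
    simpa only [RiskSafe, typeIRisk, hE] using hadm.1
  have hrisk : typeIIRisk Q m δ (fun _ => b) ≤ typeIIRisk Q m ψ (fun _ => b) :=
    not_lt.1 fun hlt => hadm.2 ψ hψ
      ⟨hsafe, fun B _ => typeIIRisk_replaceAt_le hm.le hle B, _, hΓ, hlt⟩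
  simpa only [ψ, replaceAt_self] using ae_eq_of_typeIIRisk_const_le hm (hδ.1.measurable_apply b)
    (fun x => le_replaceAt hle x b) (fun x => hψ.1.2.1 x b hb) hrisk

/-- canonical representation, binary case: when the likelihood ratio is
atomless under `P`, any `Γ`-admissible binary test family satisfies
`φ(x,b) = 1{ℓ(b) ≤ E_φ(x)}` for `P`-a.e. `x`, for each `b ∈ ℬ`. -/
theorem stmt6
    [StandardBorelSpace 𝒳]
    (P Q : Measure 𝒳) [IsProbabilityMeasure P] [IsProbabilityMeasure Q]
    (hPQ : P ≪ Q) (hQP : Q ≪ P)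
    (ℬ : Set ℝ) (hℬne : ℬ.Nonempty)
    (ℓ : ℝ → ℝ) (hℓmeas : Measurable ℓ) (hℓpos : ∀ b ∈ ℬ, 0 < ℓ b)
    (hℓmono : ∀ b₁ ∈ ℬ, ∀ b₂ ∈ ℬ, b₁ ≤ b₂ → ℓ b₁ ≤ ℓ b₂)
    (hℓgt1 : ∃ b ∈ ℬ, 1 < ℓ b)
    (m : ℝ → ℝ) (hm : ∀ b ∈ ℬ, 0 < m b)
    (hcont : AtomlessLR P Q)
    (Γ : Set (𝒳 → ℝ)) (hΓ : ConstAdv 𝒳 ℬ ⊆ Γ)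
    (φ : 𝒳 → ℝ → ℝ) (hφ : IsBinaryTestFamily ℬ ℓ φ)
    (hadm : AdmissibleBinary P Q ℬ ℓ m Γ φ) :
    ∀ b ∈ ℬ, ∀ᵐ x ∂P,
      φ x b = if ENNReal.ofReal (ℓ b) ≤ Esup ℬ ℓ φ x then (1 : ℝ) else 0 := by
  intro b hb
  exact hPQ.ae_le (stmt6_general hb (hℓpos b hb).le (hm b hb) (hΓ ⟨b, hb, rfl⟩) hφ hadm)

end PostHocTesting
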